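/- arXiv:2502.18575 — 4 statements merged into one kernel-verified Lean document; each statement's English description precedes it below -/
import Mathlib

section
/- Let G₁ = R ⊗ I₃ and G₂ = I₃ ⊗ R be the 27×27 matrices over K obtained by Kronecker product of the nineteen-vertex braided R-matrix with the 3×3 identity matrix. Then G₁·G₂·G₁ = G₂·G₁·G₂, i.e., the matrices G₁, G₂ satisfy the braid relation and hence furnish a representation of the three-strand braid group B₃. -/
open Matrix Kronecker

set_option synthInstance.maxHeartbeats 1000000
set_option maxHeartbeats 1000000

noncomputable section

/-- The ground field `K = ℚ(t)` of rational functions in one variable over `ℚ`. -/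
abbrev K : Type := RatFunc ℚ

/-- The variable `t`, a square root of `q`. -/
def t : K := RatFunc.X

/-- `q = t²`. -/
def q : K := t ^ 2

/-- Kronecker product of square matrices, flattened with the lexicographic
(row-major) index ordering: the pair `(i, j)` corresponds to position `i * n + j`. -/
def kron {m n : ℕ} (A : Matrix (Fin m) (Fin m) K) (B : Matrix (Fin n) (Fin n) K) :
    Matrix (Fin (m * n)) (Fin (m * n)) K :=
  Matrix.reindex finProdFinEquiv finProdFinEquiv (A ⊗ₖ B)

/-- The braided R-matrix of the three-state (nineteen-vertex) model, with rows and
columns indexed by pairs `(i,j) ∈ {1,2,3}²` in lexicographic order; here `-q`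
represents `-q`, and `-t + t⁵` represents `-q^{1/2} + q^{5/2}`. -/
def R : Matrix (Fin 9) (Fin 9) K :=
  !![1,  0,    0,    0,        0,            0,  0,            0,        0;
     0,  0,    0,    -q,       0,            0,  0,            0,        0;
     0,  0,    0,    0,        0,            0,  q ^ 2,        0,        0;
     0, -q,    0,    1 - q ^ 2, 0,           0,  0,            0,        0;
     0,  0,    0,    0,        q,            0,  -t + t ^ 5,   0,        0;
     0,  0,    0,    0,        0,            0,  0,            -q,       0;
     0,  0,    q ^ 2, 0,       -t + t ^ 5,   0,  1 - q - q ^ 2 + q ^ 3, 0, 0;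
     0,  0,    0,    0,        0,            -q, 0,            1 - q ^ 2, 0;
     0,  0,    0,    0,        0,            0,  0,            0,        1]

/-!
Drinfeld's argument for the Yang–Baxter equation. The product `G₁G₂` carries the third strand over
the first two; decomposed by the states of that strand, it has as blocks the coproducts
`∑ₘ Lᵢₘ ⊗ Lₘₗ` of the entries of the `L`-operator of `R`. Hence the braid relation
`G₁G₂ · G₁ = G₂ · G₁G₂` says exactly that `R` commutes with all these coproducts. Here `L` is
triangular: its diagonal entries are group-like, so the ice rule handles them, and three raising
operators remain.
-/

section BraidRelation

variable {A n : Type*} [CommSemiring A] [Fintype n]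

/-- The braided R-matrix with `L`-operator `L`: the strand that enters on the right in state `l`
leaves on the left in state `i`, and `L i l` acts on the strand it crosses. -/
def braidedOfL (L : Matrix n n (Matrix n n A)) : Matrix (n × n) (n × n) A :=
  of fun x y => L x.1 y.2 x.2 y.1

/-- The coproduct `Δ(L i l) = ∑ₘ L i m ⊗ L m l` of an entry of an `L`-operator. -/
def coproductL (L : Matrix n n (Matrix n n A)) (i l : n) : Matrix (n × n) (n × n) A :=
  ∑ m, L i m ⊗ₖ L m l

theorem coproductL_self {n : Type*} [Fintype n] [LinearOrder n] {L : Matrix n n (Matrix n n A)}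
    (hL : L.BlockTriangular OrderDual.toDual) (i : n) : coproductL L i i = L i i ⊗ₖ L i i := by
  refine Finset.sum_eq_single_of_mem i (Finset.mem_univ i) fun m _ hm => ?_
  rcases hm.lt_or_gt with hmi | him
  · rw [hL (show m < i from hmi), kronecker_zero]
  · rw [hL (show i < m from him), zero_kronecker]

theorem coproductL_of_lt {n : Type*} [Fintype n] [LinearOrder n] {L : Matrix n n (Matrix n n A)}
    (hL : L.BlockTriangular OrderDual.toDual) {i l : n} (hil : i < l) : coproductL L i l = 0 := by
  refine Finset.sum_eq_zero fun m _ => ?_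
  rcases lt_or_ge i m with him | hmi
  · rw [hL (show i < m from him), zero_kronecker]
  · rw [hL (show m < l from hmi.trans_lt hil), kronecker_zero]

theorem coproductL_mulVec_vec (L : Matrix n n (Matrix n n A)) (i l : n) (X : Matrix n n A) :
    coproductL L i l *ᵥ vec X = vec (∑ m, L m l * X * (L i m)ᵀ) := by
  simp only [coproductL, sum_mulVec, kronecker_mulVec_vec, vec_sum]

variable [DecidableEq n]

/-- The operator `S ⊗ 1` on three strands, crossing the first two. The triple tensor product is
indexed by `n × n × n`, bracketed to the right. -/
def crossing₁₂ (S : Matrix (n × n) (n × n) A) : Matrix (n × n × n) (n × n × n) A :=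
  reindex (Equiv.prodAssoc n n n) (Equiv.prodAssoc n n n) (S ⊗ₖ 1)

/-- The operator `1 ⊗ S` on three strands, crossing the last two. -/
def crossing₂₃ (S : Matrix (n × n) (n × n) A) : Matrix (n × n × n) (n × n × n) A :=
  1 ⊗ₖ S

/-- The braid relation (the braided form of the Yang–Baxter equation) for a matrix acting on
two strands. -/
def IsBraiding (S : Matrix (n × n) (n × n) A) : Prop :=
  crossing₁₂ S * crossing₂₃ S * crossing₁₂ S = crossing₂₃ S * crossing₁₂ S * crossing₂₃ S

theorem crossing₂₃_mul_apply (S : Matrix (n × n) (n × n) A) (X : Matrix (n × n × n) (n × n × n) A)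
    (i : n) (x : n × n) (y : n × n × n) :
    (crossing₂₃ S * X) (i, x) y = ∑ z, S x z * X (i, z) y := by
  simp [crossing₂₃, mul_apply, Fintype.sum_prod_type, one_apply]

theorem mul_crossing₁₂_apply (S : Matrix (n × n) (n × n) A) (X : Matrix (n × n × n) (n × n × n) A)
    (x : n × n × n) (y : n × n) (l : n) :
    (X * crossing₁₂ S) x (y.1, y.2, l) = ∑ z : n × n, X x (z.1, z.2, l) * S z y := by
  simp [crossing₁₂, mul_apply, Fintype.sum_prod_type, one_apply]

theorem crossing₁₂_mul_crossing₂₃_apply (L : Matrix n n (Matrix n n A)) (i l : n) (x y : n × n) :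
    (crossing₁₂ (braidedOfL L) * crossing₂₃ (braidedOfL L)) (i, x) (y.1, y.2, l) =
      coproductL L i l x y := by
  simp [crossing₁₂, crossing₂₃, braidedOfL, coproductL, mul_apply, Fintype.sum_prod_type,
    one_apply, Matrix.sum_apply]

theorem isBraiding_braidedOfL_iff (L : Matrix n n (Matrix n n A)) :
    IsBraiding (braidedOfL L) ↔ ∀ i l, Commute (braidedOfL L) (coproductL L i l) := by
  have left_apply (i l : n) (x y : n × n) :
      (crossing₁₂ (braidedOfL L) * crossing₂₃ (braidedOfL L) * crossing₁₂ (braidedOfL L))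
        (i, x) (y.1, y.2, l) = (coproductL L i l * braidedOfL L) x y := by
    simp only [mul_crossing₁₂_apply, crossing₁₂_mul_crossing₂₃_apply,
      mul_apply (M := coproductL L i l)]
  have right_apply (i l : n) (x y : n × n) :
      (crossing₂₃ (braidedOfL L) * crossing₁₂ (braidedOfL L) * crossing₂₃ (braidedOfL L))
        (i, x) (y.1, y.2, l) = (braidedOfL L * coproductL L i l) x y := by
    simp only [Matrix.mul_assoc, crossing₂₃_mul_apply, crossing₁₂_mul_crossing₂₃_apply,
      mul_apply (M := braidedOfL L)]
  constructor
  · intro h i l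
    ext x y
    rw [← left_apply, ← right_apply, h]
  · intro h
    ext ⟨i, x⟩ ⟨j, k, l⟩
    exact (left_apply i l x (j, k)).trans <|
      (congrFun₂ (h i l).eq.symm x (j, k)).trans (right_apply i l x (j, k)).symm

end BraidRelation

theorem commute_diagonal {A n : Type*} [CommSemiring A] [Fintype n] [DecidableEq n]
    {M : Matrix n n A} {d : n → A} (h : ∀ i j, d i ≠ d j → M i j = 0) :
    Commute M (diagonal d) := by
  ext i j
  rw [mul_diagonal, diagonal_mul]
  by_cases hd : d i = d j
  · rw [hd, mul_comm]
  · rw [h i j hd, zero_mul, mul_zero]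

section NineteenVertex

variable {A : Type*} [CommRing A]

/-- The `L`-operator of the nineteen-vertex model over an arbitrary commutative ring, with `s` in
the role of `t`, so that `q = s²`. -/
def nineteenVertexL (s : A) : Matrix (Fin 3) (Fin 3) (Matrix (Fin 3) (Fin 3) A) :=
  !![diagonal ![1, -s ^ 2, s ^ 4], 0, 0;
     !![0, 1 - s ^ 4, 0; 0, 0, -s * (1 - s ^ 4); 0, 0, 0],
       diagonal ![-s ^ 2, s ^ 2, -s ^ 2], 0;
     !![0, 0, (1 - s ^ 2) * (1 - s ^ 4); 0, 0, 0; 0, 0, 0],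
       !![0, -s * (1 - s ^ 4), 0; 0, 0, 1 - s ^ 4; 0, 0, 0],
       diagonal ![s ^ 4, -s ^ 2, 1]]

/-- The braided R-matrix of the nineteen-vertex model over an arbitrary commutative ring. -/
def nineteenVertex (s : A) : Matrix (Fin 3 × Fin 3) (Fin 3 × Fin 3) A :=
  braidedOfL (nineteenVertexL s)

/-- The action of `nineteenVertex s` on a two-strand vector, written as a `3 × 3` matrix `X` whose
entry `X j i` is the coefficient of the state `(i, j)`; this is the ordering of `Matrix.vec`. -/
def nineteenVertexAct (s : A) (X : Matrix (Fin 3) (Fin 3) A) : Matrix (Fin 3) (Fin 3) A :=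
  !![X 0 0,
     -s ^ 2 * X 1 0 + (1 - s ^ 4) * X 0 1,
     s ^ 4 * X 2 0 - s * (1 - s ^ 4) * X 1 1 + (1 - s ^ 2) * (1 - s ^ 4) * X 0 2;
     -s ^ 2 * X 0 1,
     s ^ 2 * X 1 1 - s * (1 - s ^ 4) * X 0 2,
     -s ^ 2 * X 2 1 + (1 - s ^ 4) * X 1 2;
     s ^ 4 * X 0 2,
     -s ^ 2 * X 1 2,
     X 2 2]

theorem nineteenVertex_mulVec_vec (s : A) (X : Matrix (Fin 3) (Fin 3) A) :
    nineteenVertex s *ᵥ vec X = vec (nineteenVertexAct s X) := by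
  ext ⟨i, j⟩
  simp only [mulVec, dotProduct, Fintype.sum_prod_type, Fin.sum_univ_three, nineteenVertex,
    braidedOfL, of_apply]
  fin_cases i <;> fin_cases j <;>
    simp only [nineteenVertexL, nineteenVertexAct, vec, of_apply, cons_val, Fin.reduceFinMk,
      Fin.mk_zero, Fin.mk_one, diagonal_apply, Fin.reduceEq, Matrix.zero_apply, if_true,
      if_false] <;>
    ring

theorem nineteenVertex_commute_coproductL_of {s : A}
    {L : Matrix (Fin 3) (Fin 3) (Matrix (Fin 3) (Fin 3) A)} {i l : Fin 3}
    (h : ∀ X, nineteenVertexAct s (∑ m, L m l * X * (L i m)ᵀ) =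
      ∑ m, L m l * nineteenVertexAct s X * (L i m)ᵀ) :
    Commute (nineteenVertex s) (coproductL L i l) := by
  refine ext_iff_mulVec.mpr fun w => ?_
  obtain ⟨X, rfl⟩ := vec_bijective.surjective w
  simp only [← mulVec_mulVec, nineteenVertex_mulVec_vec, coproductL_mulVec_vec, h]

theorem nineteenVertexL_blockTriangular (s : A) :
    (nineteenVertexL s).BlockTriangular OrderDual.toDual := by
  intro i l (hil : i < l)
  fin_cases i <;> fin_cases l <;> first | rfl | exact absurd hil (by decide)

theorem nineteenVertex_ice_rule (s : A) (i j k l : Fin 3) (h : (i + j : ℕ) ≠ k + l) :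
    nineteenVertex s (i, j) (k, l) = 0 := by
  fin_cases i <;> fin_cases j <;> fin_cases k <;> fin_cases l <;> try exact absurd rfl h
  all_goals simp only [Fin.reduceFinMk, Fin.mk_zero, Fin.mk_one]
  all_goals rfl

theorem nineteenVertex_commute_groupLike (s : A) {k : Fin 3 → A} (hk : k 0 * k 2 = k 1 * k 1) :
    Commute (nineteenVertex s) (diagonal k ⊗ₖ diagonal k) := by
  have weight_eq (i j i' j' : Fin 3) (h : (i + j : ℕ) = i' + j') : k i * k j = k i' * k j' := by
    fin_cases i <;> fin_cases j <;> fin_cases i' <;> fin_cases j' <;> simp_all [mul_comm]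
  rw [diagonal_kronecker_diagonal]
  exact commute_diagonal fun x y hxy =>
    nineteenVertex_ice_rule s _ _ _ _ fun h => hxy (weight_eq _ _ _ _ h)

theorem nineteenVertex_commute_raising₁₀ (s : A) :
    Commute (nineteenVertex s) (coproductL (nineteenVertexL s) 1 0) := by
  refine nineteenVertex_commute_coproductL_of fun X => ?_
  simp only [nineteenVertexL, Fin.sum_univ_three, of_apply, cons_val, diagonal_transpose,
    transpose_zero, Matrix.mul_zero, add_zero]
  ext j k
  fin_cases j <;> fin_cases k <;>
    simp only [nineteenVertexAct, of_apply, cons_val, Fin.reduceFinMk, Fin.mk_zero, Fin.mk_one,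
      Matrix.add_apply, mul_apply, transpose_apply, Fin.sum_univ_three, diagonal_apply,
      Fin.reduceEq, if_true, if_false, mul_zero, zero_mul, add_zero, zero_add] <;>
    ring

theorem nineteenVertex_commute_raising₂₁ (s : A) :
    Commute (nineteenVertex s) (coproductL (nineteenVertexL s) 2 1) := by
  refine nineteenVertex_commute_coproductL_of fun X => ?_
  simp only [nineteenVertexL, Fin.sum_univ_three, of_apply, cons_val, diagonal_transpose,
    Matrix.zero_mul, zero_add]
  ext j k
  fin_cases j <;> fin_cases k <;>
    simp only [nineteenVertexAct, of_apply, cons_val, Fin.reduceFinMk, Fin.mk_zero, Fin.mk_one,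
      Matrix.add_apply, mul_apply, transpose_apply, Fin.sum_univ_three, diagonal_apply,
      Fin.reduceEq, if_true, if_false, mul_zero, zero_mul, add_zero, zero_add] <;>
    ring

theorem nineteenVertex_commute_raising₂₀ (s : A) :
    Commute (nineteenVertex s) (coproductL (nineteenVertexL s) 2 0) := by
  refine nineteenVertex_commute_coproductL_of fun X => ?_
  simp only [nineteenVertexL, Fin.sum_univ_three, of_apply, cons_val, diagonal_transpose,
    Matrix.mul_assoc]
  ext j k
  fin_cases j <;> fin_cases k <;>
    simp only [nineteenVertexAct, of_apply, cons_val, Fin.reduceFinMk, Fin.mk_zero, Fin.mk_one,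
      Matrix.add_apply, mul_apply, transpose_apply, Fin.sum_univ_three, diagonal_apply,
      Fin.reduceEq, if_true, if_false, mul_zero, zero_mul, add_zero, zero_add] <;>
    ring

theorem braid_relation_nineteen_vertex_general (s : A) : IsBraiding (nineteenVertex s) := by
  have hL := nineteenVertexL_blockTriangular s
  refine (isBraiding_braidedOfL_iff _).mpr fun i l => ?_
  rcases lt_trichotomy i l with hil | rfl | hli
  · rw [coproductL_of_lt hL hil]
    exact Commute.zero_right _
  · rw [coproductL_self hL]
    fin_cases i <;> refine nineteenVertex_commute_groupLike s ?_ <;>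
      simp only [cons_val] <;> ring
  · fin_cases i <;> fin_cases l <;> first
      | exact absurd hli (by decide)
      | exact nineteenVertex_commute_raising₁₀ s
      | exact nineteenVertex_commute_raising₂₁ s
      | exact nineteenVertex_commute_raising₂₀ s

end NineteenVertex

/-- The lexicographic numbering of three-strand states. -/
def finTripleEquiv (n : ℕ) : Fin n × Fin n × Fin n ≃ Fin (n * (n * n)) :=
  ((Equiv.refl _).prodCongr finProdFinEquiv).trans finProdFinEquiv

theorem one_kron_reindex {n : ℕ} (S : Matrix (Fin n × Fin n) (Fin n × Fin n) K) :
    kron (1 : Matrix (Fin n) (Fin n) K) (reindex finProdFinEquiv finProdFinEquiv S) =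
      reindex (finTripleEquiv n) (finTripleEquiv n) (crossing₂₃ S) :=
  rfl

theorem kron_reindex_one (S : Matrix (Fin 3 × Fin 3) (Fin 3 × Fin 3) K) :
    kron (reindex finProdFinEquiv finProdFinEquiv S) (1 : Matrix (Fin 3) (Fin 3) K) =
      reindex (finTripleEquiv 3) (finTripleEquiv 3) (crossing₁₂ S) := by
  have numbering : (Equiv.prodAssoc _ _ _).symm.trans
      ((finProdFinEquiv.prodCongr (Equiv.refl _)).trans finProdFinEquiv) = finTripleEquiv 3 := by
    decide
  rw [← numbering]
  rfl

theorem IsBraiding.kron {S : Matrix (Fin 3 × Fin 3) (Fin 3 × Fin 3) K} (h : IsBraiding S) :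
    let M : Matrix (Fin 9) (Fin 9) K := reindex finProdFinEquiv finProdFinEquiv S
    let G₁ : Matrix (Fin 27) (Fin 27) K := kron M (1 : Matrix (Fin 3) (Fin 3) K)
    let G₂ : Matrix (Fin 27) (Fin 27) K := kron (1 : Matrix (Fin 3) (Fin 3) K) M
    G₁ * G₂ * G₁ = G₂ * G₁ * G₂ := by
  intro M G₁ G₂
  have hG₁ : G₁ = reindexAlgEquiv K K (finTripleEquiv 3) (crossing₁₂ S) := kron_reindex_one S
  have hG₂ : G₂ = reindexAlgEquiv K K (finTripleEquiv 3) (crossing₂₃ S) := one_kron_reindex S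
  rw [hG₁, hG₂]
  simp only [← map_mul]
  exact congrArg _ h

theorem R_eq_reindex_nineteenVertex :
    R = reindex finProdFinEquiv finProdFinEquiv (nineteenVertex t) := by
  rw [← Equiv.symm_apply_eq]
  ext ⟨i, j⟩ ⟨k, l⟩
  change R (finProdFinEquiv (i, j)) (finProdFinEquiv (k, l)) = nineteenVertexL t i l j k
  fin_cases i <;> fin_cases j <;> fin_cases k <;> fin_cases l <;>
    simp only [R, q, nineteenVertexL, finProdFinEquiv, Equiv.coe_fn_mk, Nat.reduceMul,
      Nat.reduceAdd, Fin.coe_ofNat_eq_mod, Nat.reduceMod, of_apply, cons_val, diagonal_apply,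
      Fin.reduceFinMk, Fin.mk_zero, Fin.mk_one, Fin.reduceEq, Matrix.zero_apply, if_true,
      if_false] <;>
    ring

/-- the 27×27 matrices `G₁ = R ⊗ I₃` and `G₂ = I₃ ⊗ R` satisfy the braid
relation `G₁·G₂·G₁ = G₂·G₁·G₂`, hence furnish a representation of the three-strand
braid group `B₃`. -/
theorem braid_relation_nineteen_vertex :
    kron R (1 : Matrix (Fin 3) (Fin 3) K) * kron (1 : Matrix (Fin 3) (Fin 3) K) R *
        kron R (1 : Matrix (Fin 3) (Fin 3) K) =
      kron (1 : Matrix (Fin 3) (Fin 3) K) R * kron R (1 : Matrix (Fin 3) (Fin 3) K) *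
        kron (1 : Matrix (Fin 3) (Fin 3) K) R := by
  rw [R_eq_reindex_nineteenVertex]
  exact (braid_relation_nineteen_vertex_general t).kron
end
end

section
/- The nineteen-vertex braided R-matrix satisfies the cubic (skein) relation (R − I₉)(R + q²·I₉)(R − q³·I₉) = 0; that is, the eigenvalues of R are among 1, −q², q³. In particular R is invertible over K. -/
/-!
By the ice rule, `R` preserves the charge `i + j` of the basis vector indexed by the pair `(i, j)`,
so it is a direct sum of five blocks, one per charge. Their characteristic polynomials are `X - 1`,
`(X - 1) (X + q²)` and `(X - 1) (X + q²) (X - q³)`, all of which divide the last one; by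
Cayley–Hamilton that cubic annihilates `R`. Its constant term is the unit `q⁵`, so `R` is a unit.
-/

open Matrix

set_option synthInstance.maxHeartbeats 1000000
set_option maxHeartbeats 1000000

noncomputable section

section Polynomial

open Polynomial

theorem isUnit_of_aeval_eq_zero {A B : Type*} [CommRing A] [Ring B] [Algebra A B] {b : B}
    {p : A[X]} (hp : aeval b p = 0) (h₀ : IsUnit (p.coeff 0)) : IsUnit b := by
  have factor : b * aeval b p.divX = -algebraMap A B (p.coeff 0) := by
    refine eq_neg_of_add_eq_zero_left ?_
    simpa only [map_add, map_mul, aeval_X, aeval_C, hp] using congrArg (aeval b) p.X_mul_divX_add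
  have comm : Commute b (aeval b p.divX) := by
    simpa only [aeval_X] using (Commute.all X p.divX).map (aeval b)
  exact (comm.isUnit_mul_iff.mp (factor ▸ (h₀.map (algebraMap A B)).neg)).1

theorem aeval_blockDiagonal' {ι A B : Type*} [Fintype ι] [DecidableEq ι] [CommSemiring A]
    [Semiring B] [Algebra A B] {n : ι → Type*} [∀ k, Fintype (n k)] [∀ k, DecidableEq (n k)]
    (M : ∀ k, Matrix (n k) (n k) B) (p : A[X]) :
    aeval (blockDiagonal' M) p = blockDiagonal' fun k ↦ aeval (M k) p := by
  have h := aeval_algHom_apply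
    (AlgHom.mk' (blockDiagonal'RingHom n B) blockDiagonal'_smul) M p
  rwa [aeval_pi_apply] at h

end Polynomial

/-- The number of pairs `(i, j) ∈ {0, 1, 2}²` of charge `i + j = c`. -/
def chargeMultiplicity : Fin 5 → ℕ := ![1, 2, 3, 2, 1]

/-- The pairs `(i, j) ∈ {0, 1, 2}²`, encoded as `3 * i + j`, sorted by their charge `c = i + j`.
The `k`-th pair of charge `c` has `i = k + (c - 2)` with truncated subtraction, hence
`3 * i + j = c + 2 * i`. -/
def chargeEquiv : (Σ c, Fin (chargeMultiplicity c)) ≃ Fin 9 :=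
  Equiv.ofBijective (fun x ↦ Fin.ofNat 9 (x.1 + 2 * (x.2 + (x.1 - 2 : ℕ)))) (by decide)

section ChargeBlocks

variable {A : Type*} [CommRing A]

open Polynomial

/-- The skein polynomial `(X - 1) (X + x²) (X - x³)`, with `x` in the role of `q`. -/
def skeinPolynomial (x : A) : A[X] := (X - 1) * (X + C (x ^ 2)) * (X - C (x ^ 3))

theorem coeff_zero_skeinPolynomial (x : A) : (skeinPolynomial x).coeff 0 = x ^ 5 := by
  simp only [skeinPolynomial, mul_coeff_zero, coeff_sub, coeff_add, coeff_X_zero, coeff_one_zero,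
    coeff_C_zero]
  ring

theorem aeval_skeinPolynomial {B : Type*} [Ring B] [Algebra A B] (x : A) (b : B) :
    aeval b (skeinPolynomial x) =
      (b - 1) * (b + x ^ 2 • (1 : B)) * (b - x ^ 3 • (1 : B)) := by
  simp only [skeinPolynomial, map_mul, map_add, map_sub, map_one, aeval_X, aeval_C,
    Algebra.algebraMap_eq_smul_one]

/-- The block of the nineteen-vertex R-matrix at the charges `1` and `3`, with `x` in the role
of `q`. -/
def doubletBlock (x : A) : Matrix (Fin 2) (Fin 2) A :=
  !![0, -x; -x, 1 - x ^ 2]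

/-- The block of the nineteen-vertex R-matrix at charge `2`, with `s` in the role of `t`, so that
`s ^ 2` is in the role of `q`. -/
def tripletBlock (s : A) : Matrix (Fin 3) (Fin 3) A :=
  !![0, 0, (s ^ 2) ^ 2;
     0, s ^ 2, -s + s ^ 5;
     (s ^ 2) ^ 2, -s + s ^ 5, 1 - s ^ 2 - (s ^ 2) ^ 2 + (s ^ 2) ^ 3]

theorem charpoly_doubletBlock (x : A) :
    (doubletBlock x).charpoly = (X - 1) * (X + C (x ^ 2)) := by
  have charmatrix_eq : (doubletBlock x).charmatrix =
      !![X, C x;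
         C x, X - C (1 - x ^ 2)] := by
    ext1 i j
    fin_cases i <;> fin_cases j <;> simp [doubletBlock]
  rw [charpoly, charmatrix_eq, det_fin_two_of]
  simp only [map_sub, map_one, map_pow]
  ring

theorem charpoly_tripletBlock (s : A) :
    (tripletBlock s).charpoly = skeinPolynomial (s ^ 2) := by
  have charmatrix_eq : (tripletBlock s).charmatrix =
      !![X, 0, -C ((s ^ 2) ^ 2);
         0, X - C (s ^ 2), -C (-s + s ^ 5);
         -C ((s ^ 2) ^ 2), -C (-s + s ^ 5),
           X - C (1 - s ^ 2 - (s ^ 2) ^ 2 + (s ^ 2) ^ 3)] := by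
    ext1 i j
    fin_cases i <;> fin_cases j <;> simp [tripletBlock]
  rw [charpoly, charmatrix_eq, det_fin_three, skeinPolynomial]
  simp only [of_apply, cons_val, map_add, map_sub, map_neg, map_one, map_pow]
  ring

/-- The blocks of the nineteen-vertex R-matrix, indexed by charge, with `s` in the role of `t`. -/
def chargeBlock (s : A) :
    ∀ c, Matrix (Fin (chargeMultiplicity c)) (Fin (chargeMultiplicity c)) A
  | 0 | 4 => (1 : Matrix (Fin 1) (Fin 1) A)
  | 1 | 3 => doubletBlock (s ^ 2)
  | 2 => tripletBlock s

theorem charpoly_chargeBlock_dvd (s : A) (c : Fin 5) :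
    (chargeBlock s c).charpoly ∣ skeinPolynomial (s ^ 2) := by
  have singlet : (1 : Matrix (Fin 1) (Fin 1) A).charpoly ∣ skeinPolynomial (s ^ 2) := by
    rw [charpoly_one, Fintype.card_fin, pow_one]
    exact dvd_mul_of_dvd_left (dvd_mul_right _ _) _
  have doublet : (doubletBlock (s ^ 2)).charpoly ∣ skeinPolynomial (s ^ 2) :=
    charpoly_doubletBlock (s ^ 2) ▸ dvd_mul_right _ _
  have triplet : (tripletBlock s).charpoly ∣ skeinPolynomial (s ^ 2) :=
    (charpoly_tripletBlock s).dvd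
  match c with
  | 0 | 4 => exact singlet
  | 1 | 3 => exact doublet
  | 2 => exact triplet

/-- The nineteen-vertex R-matrix over a commutative ring, assembled from its charge blocks, with
`s` in the role of `t`. -/
def nineteenVertexMatrix (s : A) : Matrix (Fin 9) (Fin 9) A :=
  reindexAlgEquiv A A chargeEquiv (blockDiagonal' (chargeBlock s))

theorem R_eq_nineteenVertexMatrix : R = nineteenVertexMatrix t := by
  rw [nineteenVertexMatrix, ← AlgEquiv.symm_apply_eq]
  ext ⟨c, k⟩ ⟨d, l⟩
  fin_cases c <;> fin_cases k <;> fin_cases d <;> fin_cases l <;> rfl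

theorem aeval_nineteenVertexMatrix_skeinPolynomial (s : A) :
    aeval (nineteenVertexMatrix s) (skeinPolynomial (s ^ 2)) = 0 := by
  have block_eq_zero : (fun c ↦ aeval (chargeBlock s c) (skeinPolynomial (s ^ 2))) = 0 :=
    funext fun c ↦
      aeval_eq_zero_of_dvd_aeval_eq_zero (charpoly_chargeBlock_dvd s c) (aeval_self_charpoly _)
  rw [nineteenVertexMatrix, aeval_algHom_apply, aeval_blockDiagonal', block_eq_zero,
    blockDiagonal'_zero, map_zero]

theorem nineteen_vertex_skein_relation_general (s : A) :
    (nineteenVertexMatrix s - 1) *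
          (nineteenVertexMatrix s + (s ^ 2) ^ 2 • (1 : Matrix (Fin 9) (Fin 9) A)) *
        (nineteenVertexMatrix s - (s ^ 2) ^ 3 • (1 : Matrix (Fin 9) (Fin 9) A)) = 0 ∧
      (IsUnit s → IsUnit (nineteenVertexMatrix s)) := by
  have skein := aeval_nineteenVertexMatrix_skeinPolynomial s
  refine ⟨aeval_skeinPolynomial (s ^ 2) (nineteenVertexMatrix s) ▸ skein, fun hs ↦ ?_⟩
  refine isUnit_of_aeval_eq_zero skein ?_
  rw [coeff_zero_skeinPolynomial]
  exact (hs.pow 2).pow 5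

end ChargeBlocks

/-- the nineteen-vertex braided R-matrix satisfies the cubic (skein)
relation `(R − I₉)(R + q²·I₉)(R − q³·I₉) = 0`; that is, the eigenvalues of `R` are
among `1, −q², q³`. In particular `R` is invertible over `K`. -/
theorem nineteen_vertex_skein_relation :
    (R - 1) * (R + q ^ 2 • (1 : Matrix (Fin 9) (Fin 9) K)) *
        (R - q ^ 3 • (1 : Matrix (Fin 9) (Fin 9) K)) = 0 ∧
    IsUnit R := by
  rw [R_eq_nineteenVertexMatrix]
  exact (nineteen_vertex_skein_relation_general t).imp_right (· RatFunc.X_ne_zero.isUnit)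
end
end

section
/- Markov move II (stabilization) property of the nineteen-vertex Markov trace: the 27×27 matrix I₃ ⊗ R is invertible over K, and for every 9×9 matrix M over K one has Tr((h⊗h⊗h)·(M ⊗ I₃)·(I₃ ⊗ R)) = (1/(1+q+q²))·Tr((h⊗h)·M) and Tr((h⊗h⊗h)·(M ⊗ I₃)·(I₃ ⊗ R)⁻¹) = (q²/(1+q+q²))·Tr((h⊗h)·M). In the notation of the Akutsu–Wadati construction, φ(A·Gₙ) = τ·φ(A) and φ(A·Gₙ⁻¹) = τ̄·φ(A) with τ = 1/(1+q+q²) and τ̄ = q²/(1+q+q²). -/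
open Matrix Kronecker

set_option synthInstance.maxHeartbeats 1000000
set_option maxHeartbeats 1000000

noncomputable section

/-- The weight matrix `h = (1/(1+q+q²))·diag(1, q, q²)`. -/
def h : Matrix (Fin 3) (Fin 3) K :=
  (1 + q + q ^ 2)⁻¹ • !![1, 0, 0; 0, q, 0; 0, 0, q ^ 2]

/-!
Move the trace over the last tensor factor inside: for every `N` acting on the first factors,
`Tr((N ⊗ h)·(I ⊗ X)) = Tr(N·(I ⊗ Tr₂((I₃ ⊗ h)·X)))`. For `X = R` and `X = R⁻¹` the partial trace
`Tr₂((I₃ ⊗ h)·X)` is the scalar matrix `τ·I₃`, respectively `τ̄·I₃`, so that adding a strand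
multiplies the trace by that scalar.
-/

theorem trace_submatrix_equiv {m n S : Type*} [Fintype m] [Fintype n] [AddCommMonoid S]
    (e : m ≃ n) (A : Matrix n n S) : trace (A.submatrix e e) = trace A :=
  e.sum_comp fun i => A i i

section PartialTrace

variable {l m n S : Type*} [Fintype n]

/-- The partial trace over the second tensor factor, for matrices indexed by pairs. -/
def partialTrace [AddCommMonoid S] (X : Matrix (m × n) (m × n) S) : Matrix m m S :=
  of fun i j => ∑ k, X (i, k) (j, k)

theorem trace_partialTrace [AddCommMonoid S] [Fintype m] (X : Matrix (m × n) (m × n) S) :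
    trace (partialTrace X) = trace X :=
  (Fintype.sum_prod_type fun p => X p p).symm

theorem partialTrace_kronecker_one_mul [NonAssocSemiring S] [Fintype m] [DecidableEq n]
    (A : Matrix m m S) (X : Matrix (m × n) (m × n) S) :
    partialTrace ((A ⊗ₖ (1 : Matrix n n S)) * X) = A * partialTrace X := by
  ext i j
  simp only [partialTrace, of_apply, mul_apply, kronecker_apply, one_apply, mul_ite, mul_one,
    mul_zero, ite_mul, zero_mul, Fintype.sum_prod_type, Finset.sum_ite_eq, Finset.mem_univ,
    if_true, Finset.mul_sum]
  exact Finset.sum_comm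

theorem partialTrace_kronecker_assoc [NonUnitalNonAssocSemiring S] (A : Matrix l l S)
    (X : Matrix (m × n) (m × n) S) :
    partialTrace (reindex (Equiv.prodAssoc l m n).symm (Equiv.prodAssoc l m n).symm (A ⊗ₖ X)) =
      A ⊗ₖ partialTrace X := by
  ext ⟨a, b⟩ ⟨a', b'⟩
  simp [partialTrace, Finset.mul_sum]

theorem trace_kronecker_mul_kronecker_assoc [CommSemiring S] [Fintype l] [Fintype m]
    [DecidableEq m] (N : Matrix (l × m) (l × m) S) (w : Matrix n n S)
    (A : Matrix l l S) (X : Matrix (m × n) (m × n) S) :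
    trace ((N ⊗ₖ w) *
        reindex (Equiv.prodAssoc l m n).symm (Equiv.prodAssoc l m n).symm (A ⊗ₖ X)) =
      trace (N * (A ⊗ₖ partialTrace (((1 : Matrix m m S) ⊗ₖ w) * X))) := by
  classical
  let assoc := (Equiv.prodAssoc l m n).symm
  have weight_split : N ⊗ₖ w = (N ⊗ₖ (1 : Matrix n n S)) *
      reindex assoc assoc ((1 : Matrix l l S) ⊗ₖ ((1 : Matrix m m S) ⊗ₖ w)) := by
    rw [reindex_apply, ← kronecker_assoc', one_kronecker_one]
    simp [assoc, ← mul_kronecker_mul]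
  have weight_absorb :
      reindex assoc assoc ((1 : Matrix l l S) ⊗ₖ ((1 : Matrix m m S) ⊗ₖ w)) *
          reindex assoc assoc (A ⊗ₖ X) =
        reindex assoc assoc (A ⊗ₖ (((1 : Matrix m m S) ⊗ₖ w) * X)) := by
    simp only [reindex_apply, submatrix_mul_equiv, ← mul_kronecker_mul, one_mul]
  rw [weight_split, Matrix.mul_assoc, weight_absorb, ← trace_partialTrace,
    partialTrace_kronecker_one_mul, partialTrace_kronecker_assoc]

end PartialTrace

section Flattening

variable {l m n : ℕ}

theorem kron_apply (A : Matrix (Fin m) (Fin m) K) (B : Matrix (Fin n) (Fin n) K)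
    (i j : Fin m × Fin n) :
    kron A B (finProdFinEquiv i) (finProdFinEquiv j) = A i.1 j.1 * B i.2 j.2 := by
  simp [kron]

theorem kron_mul_kron (A A' : Matrix (Fin m) (Fin m) K) (B B' : Matrix (Fin n) (Fin n) K) :
    kron A B * kron A' B' = kron (A * A') (B * B') := by
  simp only [kron, reindex_apply, submatrix_mul_equiv, mul_kronecker_mul]

theorem kron_one_one : kron (1 : Matrix (Fin m) (Fin m) K) (1 : Matrix (Fin n) (Fin n) K) = 1 := by
  simp [kron]

theorem kron_smul (c : K) (A : Matrix (Fin m) (Fin m) K) (B : Matrix (Fin n) (Fin n) K) :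
    kron A (c • B) = c • kron A B := by
  rw [kron, kronecker_smul]
  rfl

theorem kron_inv (A : Matrix (Fin m) (Fin m) K) (B : Matrix (Fin n) (Fin n) K) :
    (kron A B)⁻¹ = kron A⁻¹ B⁻¹ := by
  rw [kron, inv_reindex, inv_kronecker, kron]

theorem isUnit_kron {A : Matrix (Fin m) (Fin m) K} {B : Matrix (Fin n) (Fin n) K}
    (hA : IsUnit A) (hB : IsUnit B) : IsUnit (kron A B) :=
  (isUnit_submatrix_equiv _ _).2 (hA.kronecker hB)

theorem cast_finProdFinEquiv_assoc (a : Fin l) (b : Fin m) (c : Fin n) :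
    (finProdFinEquiv (finProdFinEquiv (a, b), c)).cast (l.mul_assoc m n) =
      finProdFinEquiv (a, finProdFinEquiv (b, c)) := by
  ext
  simp only [finProdFinEquiv_apply_val, Fin.val_cast]
  ring

/-- The matrix `I_l ⊗ X`, acting on the last two of three tensor factors of dimensions `l`, `m`
and `n`. The index set `Fin (l * (m * n))` of `kron 1 X` is recast as `Fin (l * m * n)`, so that
the result can be multiplied with matrices of the form `kron (kron A B) C`. -/
def oneKron (l : ℕ) (X : Matrix (Fin (m * n)) (Fin (m * n)) K) :
    Matrix (Fin (l * m * n)) (Fin (l * m * n)) K :=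
  reindex (finCongr (l.mul_assoc m n).symm) (finCongr (l.mul_assoc m n).symm)
    (kron (1 : Matrix (Fin l) (Fin l) K) X)

theorem oneKron_inv (X : Matrix (Fin (m * n)) (Fin (m * n)) K) :
    (oneKron l X)⁻¹ = oneKron l X⁻¹ := by
  rw [oneKron, inv_reindex, kron_inv, inv_one, oneKron]

theorem isUnit_oneKron {X : Matrix (Fin (m * n)) (Fin (m * n)) K} (hX : IsUnit X) :
    IsUnit (oneKron l X) :=
  (isUnit_submatrix_equiv _ _).2 (isUnit_kron isUnit_one hX)

/-- The partial trace of `(I ⊗ w) * X` over the second factor, for `X` acting on flattened pairs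
and a weight `w` on the second factor. -/
def weightedPartialTrace (w : Matrix (Fin n) (Fin n) K)
    (X : Matrix (Fin (m * n)) (Fin (m * n)) K) : Matrix (Fin m) (Fin m) K :=
  partialTrace (((1 : Matrix (Fin m) (Fin m) K) ⊗ₖ w) *
    reindex finProdFinEquiv.symm finProdFinEquiv.symm X)

theorem trace_kron_mul_oneKron (N : Matrix (Fin (l * m)) (Fin (l * m)) K)
    (w : Matrix (Fin n) (Fin n) K) (X : Matrix (Fin (m * n)) (Fin (m * n)) K) :
    trace (kron N w * oneKron l X) =
      trace (N * kron (1 : Matrix (Fin l) (Fin l) K) (weightedPartialTrace w X)) := by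
  let pair : Fin l × Fin m ≃ Fin (l * m) := finProdFinEquiv
  let triple : (Fin l × Fin m) × Fin n ≃ Fin (l * m * n) :=
    (pair.prodCongr (Equiv.refl (Fin n))).trans finProdFinEquiv
  have left_factor : (kron N w).submatrix triple triple = N.submatrix pair pair ⊗ₖ w := by
    ext ⟨i, c⟩ ⟨j, c'⟩
    simp [kron_apply, triple]
  have right_factor : (oneKron l X).submatrix triple triple =
      reindex (Equiv.prodAssoc _ _ _).symm (Equiv.prodAssoc _ _ _).symm
        ((1 : Matrix (Fin l) (Fin l) K) ⊗ₖ
          reindex finProdFinEquiv.symm finProdFinEquiv.symm X) := by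
    ext ⟨⟨a, b⟩, c⟩ ⟨⟨a', b'⟩, c'⟩
    simp [oneKron, kron_apply, triple, pair, cast_finProdFinEquiv_assoc]
  rw [← trace_submatrix_equiv triple, ← submatrix_mul_equiv _ _ triple triple triple, left_factor,
    right_factor, trace_kronecker_mul_kronecker_assoc, ← trace_submatrix_equiv pair,
    ← submatrix_mul_equiv _ _ pair pair pair]
  simp [kron, pair, weightedPartialTrace]

theorem trace_kron_mul_oneKron_of_weightedPartialTrace_eq_smul_one
    {w : Matrix (Fin n) (Fin n) K} {X : Matrix (Fin (m * n)) (Fin (m * n)) K} {c : K}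
    (hX : weightedPartialTrace w X = c • (1 : Matrix (Fin m) (Fin m) K))
    (N : Matrix (Fin (l * m)) (Fin (l * m)) K) :
    trace (kron N w * oneKron l X) = c * trace N := by
  rw [trace_kron_mul_oneKron, hX, kron_smul, kron_one_one, Matrix.mul_smul, mul_one, trace_smul,
    smul_eq_mul]

end Flattening

section RMatrix

theorem t_ne_zero : t ≠ 0 := RatFunc.X_ne_zero

/-- The inverse of `R`, obtained from `R` by replacing `t` with `t⁻¹` and interchanging the two
tensor factors. -/
def RInv : Matrix (Fin 9) (Fin 9) K :=
  !![1, 0, 0, 0, 0, 0, 0, 0, 0;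
     0, 1 - q⁻¹ ^ 2, 0, -q⁻¹, 0, 0, 0, 0, 0;
     0, 0, 1 - q⁻¹ - q⁻¹ ^ 2 + q⁻¹ ^ 3, 0, -t⁻¹ + t⁻¹ ^ 5, 0, q⁻¹ ^ 2, 0, 0;
     0, -q⁻¹, 0, 0, 0, 0, 0, 0, 0;
     0, 0, -t⁻¹ + t⁻¹ ^ 5, 0, q⁻¹, 0, 0, 0, 0;
     0, 0, 0, 0, 0, 1 - q⁻¹ ^ 2, 0, -q⁻¹, 0;
     0, 0, q⁻¹ ^ 2, 0, 0, 0, 0, 0, 0;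
     0, 0, 0, 0, 0, -q⁻¹, 0, 0, 0;
     0, 0, 0, 0, 0, 0, 0, 0, 1]

theorem R_mul_RInv : R * RInv = 1 := by
  have ht := t_ne_zero
  ext i j
  fin_cases i <;> fin_cases j <;>
    simp [R, RInv, q, Matrix.mul_apply, Fin.sum_univ_succ, ht] <;>
    field_simp <;> ring

theorem isUnit_R : IsUnit R :=
  .of_mul_eq_one _ R_mul_RInv

theorem R_inv : R⁻¹ = RInv :=
  inv_eq_right_inv R_mul_RInv

theorem weightedPartialTrace_R :
    weightedPartialTrace (m := 3) (n := 3) h R = (1 + q + q ^ 2)⁻¹ • 1 := by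
  ext i j
  fin_cases i <;> fin_cases j <;>
    simp [weightedPartialTrace, partialTrace, Matrix.mul_apply, Fintype.sum_prod_type,
      Fin.sum_univ_succ, h, R, finProdFinEquiv, Matrix.one_apply] <;> ring

theorem weightedPartialTrace_R_inv :
    weightedPartialTrace (m := 3) (n := 3) h R⁻¹ = (q ^ 2 / (1 + q + q ^ 2)) • 1 := by
  have ht := t_ne_zero
  rw [R_inv]
  ext i j
  fin_cases i <;> fin_cases j <;>
    simp [weightedPartialTrace, partialTrace, Matrix.mul_apply, Fintype.sum_prod_type,
      Fin.sum_univ_succ, h, RInv, finProdFinEquiv, Matrix.one_apply, q] <;> field_simp <;> ring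

end RMatrix

theorem markov_move_II_nineteen_vertex_general (l : ℕ) :
    IsUnit (oneKron (m := 3) (n := 3) l R) ∧
    ∀ W M : Matrix (Fin (l * 3)) (Fin (l * 3)) K,
      trace (kron W h * (kron M (1 : Matrix (Fin 3) (Fin 3) K) * oneKron l R)) =
        (1 + q + q ^ 2)⁻¹ * trace (W * M) ∧
      trace (kron W h * (kron M (1 : Matrix (Fin 3) (Fin 3) K) * (oneKron l R)⁻¹)) =
        (q ^ 2 / (1 + q + q ^ 2)) * trace (W * M) := by
  refine ⟨isUnit_oneKron isUnit_R, fun W M => ?_⟩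
  simp only [← Matrix.mul_assoc, kron_mul_kron, mul_one]
  rw [oneKron_inv]
  exact ⟨trace_kron_mul_oneKron_of_weightedPartialTrace_eq_smul_one weightedPartialTrace_R _,
    trace_kron_mul_oneKron_of_weightedPartialTrace_eq_smul_one weightedPartialTrace_R_inv _⟩

/-- Markov move II (stabilization) property of the nineteen-vertex
Markov trace: the 27×27 matrix `I₃ ⊗ R` is invertible over `K`, and for every 9×9
matrix `M` over `K` one has
`Tr((h⊗h⊗h)·(M ⊗ I₃)·(I₃ ⊗ R)) = (1/(1+q+q²))·Tr((h⊗h)·M)` and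
`Tr((h⊗h⊗h)·(M ⊗ I₃)·(I₃ ⊗ R)⁻¹) = (q²/(1+q+q²))·Tr((h⊗h)·M)`; i.e.
`φ(A·Gₙ) = τ·φ(A)` and `φ(A·Gₙ⁻¹) = τ̄·φ(A)` with `τ = 1/(1+q+q²)`,
`τ̄ = q²/(1+q+q²)`. -/
theorem markov_move_II_nineteen_vertex :
    IsUnit (kron (1 : Matrix (Fin 3) (Fin 3) K) R) ∧
    ∀ M : Matrix (Fin 9) (Fin 9) K,
      Matrix.trace (kron (kron h h) h * (kron M (1 : Matrix (Fin 3) (Fin 3) K) *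
          kron (1 : Matrix (Fin 3) (Fin 3) K) R)) =
        (1 + q + q ^ 2)⁻¹ * Matrix.trace (kron h h * M) ∧
      Matrix.trace (kron (kron h h) h * (kron M (1 : Matrix (Fin 3) (Fin 3) K) *
          (kron (1 : Matrix (Fin 3) (Fin 3) K) R)⁻¹)) =
        (q ^ 2 / (1 + q + q ^ 2)) * Matrix.trace (kron h h * M) :=
  (markov_move_II_nineteen_vertex_general 3).imp_right fun trace_eq => trace_eq (kron h h)
end
end

section
/- Vertex-model computation of the adjoint (3-colored) Jones polynomial of the trefoil knot (the closure of the two-strand braid b₁³): over K one has q²·(1+q+q²)·Tr((h ⊗ h)·R³) = q²·(1 + q³ − q⁵ + q⁶ − q⁷ − q⁸ + q⁹), where the left-hand side is the Akutsu–Wadati invariant α(b₁³) = (ττ̄)^{−1/2}(τ̄/τ)^{3/2}·Tr((h⊗h)·R³) with τ = 1/(1+q+q²), τ̄ = q²/(1+q+q²). -/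
/-!
On `V ⊗ V` the matrix `R` satisfies the quadratic relation `(R - 1)(R + q²) = 0` up to a
multiple of a rank-one matrix `E = v vᵀ`, where `v` is the singlet, an eigenvector of `R` for `q³`.
Hence `R³` is a linear combination of `R`, `1` and `E`, and only three weighted traces
`M ↦ Tr((h ⊗ h) M)` are needed: those of `1`, `R` and `E` are `1`, `τ` and `q² τ`, where
`τ = 1/(1+q+q²)`.
-/

open Matrix Kronecker

set_option synthInstance.maxHeartbeats 1000000
set_option maxHeartbeats 1000000

noncomputable section

/-- The coefficient `τ = 1/(1+q+q²)` of the Akutsu–Wadati trace, which normalizes the weight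
matrix `h`. -/
def τ : K := (1 + q + q ^ 2)⁻¹

/-- The singlet vector `v = e₁ ⊗ e₃ + t e₂ ⊗ e₂ + q e₃ ⊗ e₁` of `K³ ⊗ K³`, in the lexicographic
basis. It spans the eigenspace of `R` on which the quadratic relation fails. -/
def singlet : Fin 9 → K := ![0, 0, 1, 0, t, 0, q, 0, 0]

/-- The rank-one matrix `E = v vᵀ` of the singlet `v`. It plays the part of the Temperley–Lieb
generator, with `E² = (1+q+q²) E`. -/
def singletMatrix : Matrix (Fin 9) (Fin 9) K := vecMulVec singlet singlet

theorem one_add_q_add_q_sq_ne_zero : 1 + q + q ^ 2 ≠ 0 := by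
  have hp : (1 + Polynomial.X ^ 2 + (Polynomial.X ^ 2) ^ 2 : Polynomial ℚ) ≠ 0 := fun h0 ↦ by
    simpa using congrArg (Polynomial.eval 0) h0
  simpa [q, t] using RatFunc.algebraMap_ne_zero hp

theorem one_add_q_add_q_sq_mul_τ : (1 + q + q ^ 2) * τ = 1 :=
  mul_inv_cancel₀ one_add_q_add_q_sq_ne_zero

theorem trace_kron {m n : ℕ} (A : Matrix (Fin m) (Fin m) K) (B : Matrix (Fin n) (Fin n) K) :
    trace (kron A B) = trace A * trace B := by
  rw [← trace_kronecker]
  exact finProdFinEquiv.symm.sum_comp fun p ↦ (A ⊗ₖ B) p p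

theorem kron_diagonal_diagonal {m n : ℕ} (a : Fin m → K) (b : Fin n → K) :
    kron (diagonal a) (diagonal b) = diagonal fun k ↦ a k.divNat * b k.modNat := by
  rw [kron, diagonal_kronecker_diagonal, reindex_apply, submatrix_diagonal_equiv]
  rfl

theorem pow_three_of_sq_eq {A S : Type*} [CommSemiring A] [Semiring S] [Algebra A S]
    {α β γ c : A} {b e : S} (hb : b ^ 2 = α • b + β • 1 + γ • e) (he : b * e = c • e) :
    b ^ 3 = (α ^ 2 + β) • b + (α * β) • 1 + (γ * (α + c)) • e := by
  calc b ^ 3 = b * b ^ 2 := pow_succ' b 2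
    _ = α • b ^ 2 + β • b + (γ * c) • e := by
      rw [hb, mul_add, mul_add, mul_smul_comm, mul_smul_comm, mul_smul_comm, he, mul_one,
        ← sq, hb, smul_smul γ]
    _ = (α ^ 2 + β) • b + (α * β) • 1 + (γ * (α + c)) • e := by
      rw [hb]
      module

theorem R_mulVec_singlet : R *ᵥ singlet = q ^ 3 • singlet := by
  ext i
  fin_cases i <;> simp [R, singlet, mulVec, dotProduct, Fin.sum_univ_succ, q] <;> ring

theorem R_mul_singletMatrix : R * singletMatrix = q ^ 3 • singletMatrix := by
  rw [singletMatrix, mul_vecMulVec, R_mulVec_singlet, smul_vecMulVec]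

theorem R_sq : R ^ 2 =
    (1 - q ^ 2) • R + q ^ 2 • (1 : Matrix (Fin 9) (Fin 9) K)
      + (-(q ^ 2 * (1 - q ^ 2))) • singletMatrix := by
  rw [sq]
  ext i j
  fin_cases i <;> fin_cases j <;>
    simp [R, singletMatrix, singlet, mul_apply, Fin.sum_univ_succ, q] <;> ring

theorem R_pow_three : R ^ 3 =
    ((1 - q ^ 2) ^ 2 + q ^ 2) • R + ((1 - q ^ 2) * q ^ 2) • (1 : Matrix (Fin 9) (Fin 9) K)
      + (-(q ^ 2 * (1 - q ^ 2)) * (1 - q ^ 2 + q ^ 3)) • singletMatrix :=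
  pow_three_of_sq_eq R_sq R_mul_singletMatrix

theorem h_eq_diagonal : h = diagonal fun i : Fin 3 ↦ τ * q ^ (i : ℕ) := by
  ext i j
  fin_cases i <;> fin_cases j <;> simp [h, τ]

theorem trace_h : trace h = 1 := by
  rw [← one_add_q_add_q_sq_mul_τ, h_eq_diagonal, trace_diagonal, Fin.sum_univ_three]
  simp only [Fin.val_zero, Fin.val_one, Fin.val_two]
  ring

/-- The Akutsu–Wadati weighted trace `M ↦ Tr((h ⊗ h) M)` on two strands. The index type
`Fin (3 * 3)` of `h ⊗ h` is identified with `Fin 9` by computation. -/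
def weightedTrace : Matrix (Fin 9) (Fin 9) K →ₗ[K] K where
  toFun M := trace (kron h h * M)
  map_add' M N := by rw [Matrix.mul_add, trace_add]
  map_smul' c M := by rw [Matrix.mul_smul, trace_smul, RingHom.id_apply]

theorem weightedTrace_one : weightedTrace 1 = 1 := by
  calc weightedTrace 1 = trace (kron h h) := congrArg trace (Matrix.mul_one (kron h h))
    _ = 1 := by rw [trace_kron, trace_h, mul_one]

theorem weightedTrace_apply (M : Matrix (Fin 9) (Fin 9) K) :
    weightedTrace M = τ ^ 2 * (M 0 0 + q * (M 1 1 + M 3 3)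
      + q ^ 2 * (M 2 2 + M 4 4 + M 6 6) + q ^ 3 * (M 5 5 + M 7 7) + q ^ 4 * M 8 8) := by
  change ∑ i, (kron h h * M) i i = _
  rw [h_eq_diagonal, kron_diagonal_diagonal]
  simp [diagonal_mul, Fin.sum_univ_succ, Fin.divNat, Fin.modNat]
  ring

theorem weightedTrace_R : weightedTrace R = τ := by
  calc weightedTrace R = τ * ((1 + q + q ^ 2) * τ) := by
        rw [weightedTrace_apply]
        simp [R]
        ring
    _ = τ := by rw [one_add_q_add_q_sq_mul_τ, mul_one]

theorem weightedTrace_singletMatrix : weightedTrace singletMatrix = q ^ 2 * τ := by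
  calc weightedTrace singletMatrix = q ^ 2 * τ * ((1 + q + q ^ 2) * τ) := by
        rw [weightedTrace_apply]
        simp only [singletMatrix, vecMulVec_apply, singlet]
        rw [q]
        simp
        ring
    _ = q ^ 2 * τ := by rw [one_add_q_add_q_sq_mul_τ, mul_one]

theorem weightedTrace_R_pow_three : weightedTrace (R ^ 3) =
    ((1 - q ^ 2) ^ 2 + q ^ 2) * τ + (1 - q ^ 2) * q ^ 2
      + -(q ^ 2 * (1 - q ^ 2)) * (1 - q ^ 2 + q ^ 3) * (q ^ 2 * τ) := by
  simp only [R_pow_three, map_add, map_smul, smul_eq_mul, mul_one, weightedTrace_one,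
    weightedTrace_R, weightedTrace_singletMatrix]

/-- vertex-model computation of the adjoint (3-colored) Jones
polynomial of the trefoil knot (the closure of the two-strand braid `b₁³`): over
`K`, `q²·(1+q+q²)·Tr((h ⊗ h)·R³) = q²·(1 + q³ − q⁵ + q⁶ − q⁷ − q⁸ + q⁹)`,
the left-hand side being the Akutsu–Wadati invariant
`α(b₁³) = (ττ̄)^{−1/2}(τ̄/τ)^{3/2}·Tr((h⊗h)·R³)` with `τ = 1/(1+q+q²)`,
`τ̄ = q²/(1+q+q²)`. -/
theorem trefoil_adjoint_jones_nineteen_vertex :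
    q ^ 2 * (1 + q + q ^ 2) * Matrix.trace (kron h h * R ^ 3) =
      q ^ 2 * (1 + q ^ 3 - q ^ 5 + q ^ 6 - q ^ 7 - q ^ 8 + q ^ 9) := by
  change q ^ 2 * (1 + q + q ^ 2) * weightedTrace (R ^ 3) = _
  rw [weightedTrace_R_pow_three]
  linear_combination
    q ^ 2 * ((1 - q ^ 2) ^ 2 + q ^ 2 - q ^ 4 * (1 - q ^ 2) * (1 - q ^ 2 + q ^ 3)) *
      one_add_q_add_q_sq_mul_τ
end
end
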